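/- Let β > −1, c > 0, M ∈ ℝ, α > 0, and N ∈ ℕ. Define ρ̃ : ℕ → ℝ by ρ̃(x) = (α)ₓ(−N)ₓ/((β+1)ₓ x!) + M·δ₀(x), where δ₀(x) = 1 if x = 0 and 0 otherwise. Then ρ̃ satisfies the Pearson equation Δ[(x−1)(x+β)x·ρ̃](x) + ((β − 1 − α + N)x + αN − β)·x·ρ̃(x) = 0 for all x ∈ ℕ. -/

import Mathlib

/-- Forward difference operator on functions `ℕ → ℝ`: `Δf(x) = f(x+1) − f(x)`. -/
def ddiff (f : ℕ → ℝ) (x : ℕ) : ℝ := f (x + 1) - f x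

/-- Pochhammer symbol (ascending factorial): `(a)ₓ = a(a+1)⋯(a+x−1)`, `(a)₀ = 1`. -/
def poch (a : ℝ) : ℕ → ℝ
  | 0 => 1
  | n + 1 => poch a n * (a + n)

/-!
The Pearson equation `Δ(σρ) + τρ = 0` is the first-order recurrence
`σ(x + 1) ρ(x + 1) = (σ(x) - τ(x)) ρ(x)`. Here `σ(x + 1) = x (x + 1 + β) (x + 1)` and
`σ(x) - τ(x) = x (x + α) (x - N)`, so it is `x` times the recurrence of the Hahn weight. That
factor `x` makes the mass at `0` invisible.
-/

/-- The weight `(a)ₓ (b)ₓ / ((c)ₓ x!)`, the general term of `₂F₁(a, b; c; 1)`. The Hahn weight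
is the case `b = -N`, `c = β + 1`; dividing by zero gives `0` where `(c)ₓ = 0`. -/
noncomputable def hypergeometricWeight (a b c : ℝ) (x : ℕ) : ℝ :=
  poch a x * poch b x / (poch c x * (Nat.factorial x : ℝ))

theorem hypergeometricWeight_succ (a b c : ℝ) (x : ℕ) :
    hypergeometricWeight a b c (x + 1) =
      hypergeometricWeight a b c x * ((a + x) * (b + x) / ((c + x) * (x + 1))) := by
  simp only [hypergeometricWeight, poch, Nat.factorial_succ, Nat.cast_mul, Nat.cast_succ]
  rw [← mul_div_mul_comm]
  congr 1 <;> ring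

theorem mul_hypergeometricWeight_succ (a b : ℝ) {c : ℝ} {x : ℕ} (hc : c + x ≠ 0) :
    (c + x) * (x + 1) * hypergeometricWeight a b c (x + 1) =
      (a + x) * (b + x) * hypergeometricWeight a b c x := by
  have hx : (x : ℝ) + 1 ≠ 0 := x.cast_add_one_ne_zero
  rw [hypergeometricWeight_succ]
  field_simp

theorem ddiff_mul_add_mul_eq_zero_iff (σ τ ρ : ℕ → ℝ) (x : ℕ) :
    ddiff (fun y ↦ σ y * ρ y) x + τ x * ρ x = 0 ↔
      σ (x + 1) * ρ (x + 1) = (σ x - τ x) * ρ x := by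
  unfold ddiff
  constructor <;> intro h <;> linear_combination h

theorem hahn_dirac_pearson_general (β M α ν : ℝ) (hβ : ∀ n : ℕ, β + 1 + n ≠ 0) (ρ : ℕ → ℝ)
    (hρ : ∀ x : ℕ,
      ρ x = hypergeometricWeight α (-ν) (β + 1) x + M * (if x = 0 then (1 : ℝ) else 0)) (x : ℕ) :
    ddiff (fun y : ℕ ↦ ((y : ℝ) - 1) * ((y : ℝ) + β) * (y : ℝ) * ρ y) x
      + ((β - 1 - α + ν) * (x : ℝ) + α * ν - β) * (x : ℝ) * ρ x = 0 := by
  let w := hypergeometricWeight α (-ν) (β + 1)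
  let σ : ℕ → ℝ := fun y ↦ (y - 1) * (y + β) * y
  let τ : ℕ → ℝ := fun y ↦ ((β - 1 - α + ν) * y + α * ν - β) * y
  have σ_succ : σ (x + 1) = x * ((β + 1 + x) * (x + 1)) := by
    simp only [σ]
    push_cast
    ring
  have σ_sub_τ : σ x - τ x = (α + x) * (-ν + x) * x := by
    simp only [σ, τ]
    ring
  have ρ_succ : ρ (x + 1) = w (x + 1) := by simp [hρ, w]
  have mul_ρ : x * ρ x = x * w x := by cases x <;> simp [hρ, w]
  have w_succ : (β + 1 + x) * (x + 1) * w (x + 1) = (α + x) * (-ν + x) * w x :=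
    mul_hypergeometricWeight_succ α (-ν) (hβ x)
  refine (ddiff_mul_add_mul_eq_zero_iff σ τ ρ x).mpr ?_
  calc
    σ (x + 1) * ρ (x + 1) = x * ((β + 1 + x) * (x + 1) * w (x + 1)) := by
      rw [σ_succ, ρ_succ, mul_assoc]
    _ = (α + x) * (-ν + x) * (x * w x) := by rw [w_succ, mul_left_comm]
    _ = (σ x - τ x) * ρ x := by rw [σ_sub_τ, mul_assoc _ _ (ρ x), mul_ρ]

/-- The Hahn weight with an added mass `M` at `0`,
`ρ̃(x) = (α)ₓ(−N)ₓ/((β+1)ₓ x!) + M·δ₀(x)`, satisfies the Pearson equation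
`Δ[(x−1)(x+β)x·ρ̃](x) + ((β − 1 − α + N)x + αN − β)·x·ρ̃(x) = 0` for all `x ∈ ℕ`. -/
theorem hahn_dirac_pearson (β c M α : ℝ) (hβ : -1 < β) (hc : 0 < c) (hα : 0 < α) (N : ℕ)
    (ρ : ℕ → ℝ)
    (hρ : ∀ x : ℕ,
      ρ x = poch α x * poch (-(N : ℝ)) x / (poch (β + 1) x * (Nat.factorial x : ℝ))
        + M * (if x = 0 then (1 : ℝ) else 0)) :
    ∀ x : ℕ, ddiff (fun y : ℕ => ((y : ℝ) - 1) * ((y : ℝ) + β) * (y : ℝ) * ρ y) x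
      + ((β - 1 - α + N) * (x : ℝ) + α * N - β) * (x : ℝ) * ρ x = 0 :=
  hahn_dirac_pearson_general β M α N
    (fun n ↦ ne_of_gt (by linarith [n.cast_nonneg (α := ℝ)])) ρ hρ
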